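/- Let L ≥ 1 and nonnegative integers a_1, a_2 be given, set K = L + a_1 + a_2 + 1 (the (a_2,a_1)_L-bar-ICP with i = 2), and suppose that a_1 + a_2 + 2 divides K. Then the optimal broadcast rate R* of the (a_2,a_1)_L-bar-ICP equals exactly a_1 + a_2 + 2. -/

import Mathlib

open Finset

/-- `<m>_n`: the unique element of `{1,…,n}` congruent to `m` modulo `n`. -/
def angMod (m : ℤ) (n : ℕ) : ℕ :=
  if m % (n : ℤ) = 0 then n else (m % (n : ℤ)).toNat

/-- Message indices of the bar-ICP: pairs in `[K] × [i]`. -/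
abbrev Msg (K i : ℕ) : Type :=
  {p : ℕ × ℕ // p.1 ∈ Finset.Icc 1 K ∧ p.2 ∈ Finset.Icc 1 i}

/-- Users of the bar-ICP: elements of `[K]`. -/
abbrev User (K : ℕ) : Type := {k : ℕ // k ∈ Finset.Icc 1 K}

/-- The side-information index set `K_k` of user `k` in the
`(a_i,…,a_1)_L`-bar-ICP, as a set of pairs `(b,t)`. -/
def knownIdx (K i L : ℕ) (a : ℕ → ℕ) (k : ℕ) : Set (ℕ × ℕ) :=
  {p | ∃ t ∈ Finset.Icc 1 i, ∃ v ∈ Finset.Icc 1 (i - 1), ∃ r ∈ Finset.Icc 1 L,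
    p.2 = t ∧
    p.1 = angMod ((k : ℤ) + (∑ j ∈ Finset.Icc 1 v, (a (angMod ((i : ℤ) + (t : ℤ) - (j : ℤ)) i) : ℤ))
        + ((v : ℤ) - 1) * (L : ℤ) + (r : ℤ)) K}

/-- Want set of user `u` in the bar-ICP: the messages `(u,t)`, `t ∈ [i]`. -/
def barWant (K i : ℕ) (u : User K) : Set (Msg K i) :=
  {p | p.1.1 = u.1}

/-- Known set of user `u` in the bar-ICP. -/
def barKnown (K i L : ℕ) (a : ℕ → ℕ) (u : User K) : Set (Msg K i) :=
  {p | p.1 ∈ knownIdx K i L a u.1}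

/-- A valid index code of length `ℓ` for message length `t` for the index coding
problem with message index set `I`, users `U`, want sets `W` and known sets `Kn`. -/
def ValidCode {I U : Type} (W Kn : U → Set I) (t ℓ : ℕ) : Prop :=
  ∃ E : (I → Fin t → Bool) → Fin ℓ → Bool,
  ∃ D : ∀ u : U, (Fin ℓ → Bool) → (↥(Kn u) → Fin t → Bool) → (↥(W u) → Fin t → Bool),
    ∀ x : I → Fin t → Bool, ∀ u : U,
      D u (E x) (fun m => x m.1) = fun m => x m.1

/-- The optimal broadcast rate of an index coding problem. -/
noncomputable def optRate {I U : Type} (W Kn : U → Set I) : ℝ :=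
  sInf {ρ : ℝ | ∃ t ℓ : ℕ, 1 ≤ t ∧ ValidCode W Kn t ℓ ∧ ρ = (ℓ : ℝ) / (t : ℝ)}

/-- If `b ∈ [1,n]` is congruent to `m`, then it is `<m>_n`. -/
theorem angMod_emod (m : ℤ) (n : ℕ) (hn : 1 ≤ n) : ((angMod m n : ℕ) : ℤ) % n = m % n := by
  unfold angMod
  have h0 : 0 ≤ m % (n : ℤ) := Int.emod_nonneg _ (by omega)
  split_ifs with h
  · simp [h]
  · rw [Int.toNat_of_nonneg h0, Int.emod_emod]

theorem angMod_mem (m : ℤ) (n : ℕ) (hn : 1 ≤ n) : 1 ≤ angMod m n ∧ angMod m n ≤ n := by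
  unfold angMod
  have h0 : 0 ≤ m % (n : ℤ) := Int.emod_nonneg _ (by omega)
  have h1 : m % (n : ℤ) < n := Int.emod_lt_of_pos _ (by omega)
  split_ifs with h <;> omega

theorem eq_of_emod_eq {b c n : ℕ} (hb : 1 ≤ b) (hb' : b ≤ n) (hc : 1 ≤ c) (hc' : c ≤ n)
    (h : (b : ℤ) % n = (c : ℤ) % n) : b = c := by
  have h2 : (n : ℤ) ∣ (c : ℤ) - b := Int.ModEq.dvd h
  have h3 := Int.eq_zero_of_abs_lt_dvd h2 (by rw [abs_lt]; omega)
  omega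

/-- The gap preceding the known block, for message type `t`. -/
def gap (a : ℕ → ℕ) (t : ℕ) : ℕ := if t = 1 then a 2 else a 1

theorem mem_known_iff (K L : ℕ) (a : ℕ → ℕ) (hK : K = L + a 1 + a 2 + 1) (k b t : ℕ)
    (hb : 1 ≤ b) (hb' : b ≤ K) (ht : t = 1 ∨ t = 2) :
    (b, t) ∈ knownIdx K 2 L a k ↔
      ((gap a t : ℤ) + 1 ≤ ((b : ℤ) - k) % K ∧ ((b : ℤ) - k) % K ≤ gap a t + L) := by
  have hK1 : 1 ≤ K := by omega
  have hg : gap a t ≤ a 1 + a 2 := by unfold gap; split_ifs <;> omega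
  have hidx : a (angMod (((2 : ℕ) : ℤ) + (t : ℤ) - ((1 : ℕ) : ℤ)) 2) = gap a t := by
    rcases ht with rfl | rfl
    · simp [angMod, gap]
    · simp [angMod, gap]
  constructor
  · rintro ⟨t', -, v, hv, r, hr, h1, h2⟩
    simp only at h1 h2
    subst h1
    have hv1 : v = 1 := by simpa using hv
    subst hv1
    rw [Finset.Icc_self, Finset.sum_singleton, hidx] at h2
    have hr := Finset.mem_Icc.1 hr
    have h3 := angMod_emod ((k : ℤ) + (gap a t : ℤ) + (((1 : ℕ) : ℤ) - 1) * (L : ℤ) + (r : ℤ)) K hK1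
    rw [← h2] at h3
    have h4 : ((b : ℤ) - k) % K = ((gap a t : ℤ) + r) % K := by
      rw [Int.sub_emod, h3, ← Int.sub_emod]
      congr 1
      push_cast
      ring
    rw [h4, Int.emod_eq_of_lt (by omega) (by omega)]
    omega
  · rintro ⟨h1, h2⟩
    refine ⟨t, by simp; omega, 1, by simp, (((b : ℤ) - k) % K - gap a t).toNat,
      by simp; omega, rfl, ?_⟩
    rw [Finset.Icc_self, Finset.sum_singleton, hidx, Int.toNat_of_nonneg (by omega)]
    have hm := angMod_mem ((k : ℤ) + (gap a t : ℤ) + (((1 : ℕ) : ℤ) - 1) * (L : ℤ)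
      + (((b : ℤ) - k) % K - gap a t)) K hK1
    refine eq_of_emod_eq hb hb' hm.1 hm.2 ?_
    rw [angMod_emod _ _ hK1]
    have : (k : ℤ) + (gap a t : ℤ) + (((1 : ℕ) : ℤ) - 1) * (L : ℤ)
      + (((b : ℤ) - k) % K - gap a t) = k + ((b : ℤ) - k) % K := by push_cast; ring
    rw [this, Int.add_emod_emod]
    congr 1
    ring

theorem validCode_iff {I U : Type} (W Kn : U → Set I) (t ℓ : ℕ) :
    ValidCode W Kn t ℓ ↔ ∃ E : (I → Fin t → Bool) → Fin ℓ → Bool,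
      ∀ u x y, E x = E y → (∀ m ∈ Kn u, x m = y m) → ∀ m ∈ W u, x m = y m := by
  classical
  constructor
  · rintro ⟨E, D, h⟩
    refine ⟨E, fun u x y hE hk m hm => ?_⟩
    have hx := h x u
    have hy := h y u
    have : (fun m : Kn u => x m.1) = fun m : Kn u => y m.1 := by
      funext m; exact hk m.1 m.2
    rw [hE, this, hy] at hx
    exact (congrFun hx ⟨m, hm⟩).symm
  · rintro ⟨E, h⟩
    refine ⟨E, fun u c s =>
      if hx : ∃ x, E x = c ∧ (fun m : Kn u => x m.1) = s then fun m => hx.choose m.1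
      else fun _ _ => false, fun x u => ?_⟩
    have hx : ∃ x', E x' = E x ∧ (fun m : Kn u => x' m.1) = fun m : Kn u => x m.1 := ⟨x, rfl, rfl⟩
    beta_reduce
    rw [dif_pos hx]
    funext m
    exact h u _ _ hx.choose_spec.1 (fun m hm => congrFun hx.choose_spec.2 ⟨m, hm⟩) m.1 m.2

/-- Extension by zero of the messages in the acyclic set. -/
def ext0 (K t : ℕ) (a : ℕ → ℕ) (z : Fin (a 2 + 1) ⊕ Fin (a 1 + 1) → Fin t → Bool) :
    Msg K 2 → Fin t → Bool := fun m =>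
  if m.1.2 = 1 then
    if h : m.1.1 - 1 < a 2 + 1 then z (Sum.inl ⟨m.1.1 - 1, h⟩) else fun _ => false
  else
    if h : m.1.1 - 1 < a 1 + 1 then z (Sum.inr ⟨m.1.1 - 1, h⟩) else fun _ => false

theorem lower (L : ℕ) (hL : 1 ≤ L) (a : ℕ → ℕ) (K : ℕ) (hK : K = L + a 1 + a 2 + 1)
    (t ℓ : ℕ) (h : ValidCode (barWant K 2) (barKnown K 2 L a) t ℓ) :
    (a 1 + a 2 + 2) * t ≤ ℓ := by
  rw [validCode_iff] at h
  obtain ⟨E, h⟩ := h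
  have hinj : Function.Injective (fun z => E (ext0 K t a z)) := by
    intro z z' hE
    have key : ∀ j : ℕ, ∀ m : Msg K 2, m.1.1 ≤ j → ext0 K t a z m = ext0 K t a z' m := by
      intro j
      induction j with
      | zero =>
        intro m hm
        have := (Finset.mem_Icc.1 m.2.1).1
        omega
      | succ j ih =>
        intro m hm
        rcases Nat.lt_or_ge j m.1.1 with hlt | hge
        swap
        · exact ih m hge
        have hmj : m.1.1 = j + 1 := by omega
        have hmK := Finset.mem_Icc.1 m.2.1
        refine h ⟨m.1.1, m.2.1⟩ _ _ hE ?_ m rfl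
        rintro ⟨⟨b, s⟩, hb, hs⟩ hk
        have hb1 := Finset.mem_Icc.1 hb
        have hs1 := Finset.mem_Icc.1 hs
        simp only at hb1 hs1
        have hk' : (b, s) ∈ knownIdx K 2 L a m.1.1 := hk
        rw [mem_known_iff K L a hK _ _ _ hb1.1 hb1.2 (by omega)] at hk'
        by_cases hbj : b ≤ j
        · exact ih _ hbj
        · have hd : ((b : ℤ) - (m.1.1 : ℕ)) % K = (b : ℤ) - (m.1.1 : ℕ) :=
            Int.emod_eq_of_lt (by omega) (by omega)
          rw [hd] at hk'
          unfold ext0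
          by_cases hs2 : s = 1
          · have : ¬ (b - 1 < a 2 + 1) := by
              simp only [gap, hs2, if_true] at hk'; omega
            simp [hs2, this]
          · have : ¬ (b - 1 < a 1 + 1) := by
              simp only [gap, hs2, if_false] at hk'; omega
            simp [hs2, this]
    funext i
    rcases i with i | i
    · have := key K ⟨(i.1 + 1, 1), by simp; omega, by simp⟩ (by simp; omega)
      simpa [ext0, i.2] using this
    · have := key K ⟨(i.1 + 1, 2), by simp; omega, by simp⟩ (by simp; omega)
      simpa [ext0, i.2] using this
  have hc := Fintype.card_le_of_injective _ hinj
  simp only [Fintype.card_fun, Fintype.card_bool, Fintype.card_fin, Fintype.card_sum] at hc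
  rw [← pow_mul] at hc
  have := (Nat.pow_le_pow_iff_right (by norm_num : 1 < 2)).1 hc
  calc (a 1 + a 2 + 2) * t = t * (a 2 + 1 + (a 1 + 1)) := by ring
    _ ≤ ℓ := this

theorem range_of_emod {d K n r : ℤ} (hn : 0 < n) (hd : 0 ≤ d) (hdK : d < K) (hdvd : n ∣ K)
    (h : d % n = r) : r ≤ d ∧ d ≤ K - n + r := by
  obtain ⟨Q, rfl⟩ := hdvd
  have h1 := Int.emod_add_mul_ediv d n
  have h2 : 0 ≤ d / n := Int.ediv_nonneg hd hn.le
  have hr : 0 ≤ r := h ▸ Int.emod_nonneg _ hn.ne'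
  have h3 : d / n < Q := by
    apply Int.ediv_lt_of_lt_mul hn; linarith
  constructor
  · nlinarith
  · nlinarith

/-- The code symbol in which a message takes part. -/
def cls (a : ℕ → ℕ) (p : ℕ × ℕ) : ℕ :=
  (p.1 + if p.2 = 1 then 0 else a 2 + 1) % (a 1 + a 2 + 2)

theorem cls_known (L : ℕ) (a : ℕ → ℕ) (K : ℕ) (hK : K = L + a 1 + a 2 + 1)
    (hdvd : (a 1 + a 2 + 2) ∣ K) (k s b t : ℕ) (hk : 1 ≤ k) (hk' : k ≤ K)
    (hb : 1 ≤ b) (hb' : b ≤ K) (hs : s = 1 ∨ s = 2) (ht : t = 1 ∨ t = 2)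
    (hne : (b, t) ≠ (k, s)) (hc : cls a (b, t) = cls a (k, s)) :
    (b, t) ∈ knownIdx K 2 L a k := by
  rw [mem_known_iff K L a hK _ _ _ hb hb' ht]
  set n := a 1 + a 2 + 2 with hn
  have hdvd' : (n : ℤ) ∣ (K : ℤ) := by exact_mod_cast hdvd
  have hd0 : 0 ≤ ((b : ℤ) - k) % K := Int.emod_nonneg _ (by omega)
  have hd1 : ((b : ℤ) - k) % K < K := Int.emod_lt_of_pos _ (by omega)
  have hdn : (((b : ℤ) - k) % K) % n = ((b : ℤ) - k) % n := Int.emod_emod_of_dvd _ hdvd'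
  have hn0 : (0 : ℤ) < n := by omega
  have hKn : (n : ℤ) ≤ K := Int.le_of_dvd (by omega) hdvd'
  have hc' : ((b : ℤ) + ((if t = 1 then 0 else a 2 + 1 : ℕ) : ℤ)) ≡
      ((k : ℤ) + ((if s = 1 then 0 else a 2 + 1 : ℕ) : ℤ)) [ZMOD n] := by
    have : (b + if t = 1 then 0 else a 2 + 1) ≡ (k + if s = 1 then 0 else a 2 + 1) [MOD n] := hc
    have := (Int.natCast_modEq_iff).2 this
    push_cast at this ⊢
    exact this
  have main : ∀ r : ℤ, 0 ≤ r → r < n → (n : ℤ) ∣ ((b : ℤ) - k) - r →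
      r ≤ ((b : ℤ) - k) % K ∧ ((b : ℤ) - k) % K ≤ K - n + r := by
    intro r hr hrn hdv
    refine range_of_emod hn0 hd0 hd1 hdvd' ?_
    rw [hdn, ← Int.emod_eq_of_lt hr hrn]
    exact (Int.modEq_iff_dvd.2 hdv).symm
  have hdv := hc'.dvd
  have same : b ≠ k → (n : ℤ) ∣ ((b : ℤ) - k) →
      (n : ℤ) ≤ ((b : ℤ) - k) % K ∧ ((b : ℤ) - k) % K ≤ K - n := by
    intro hbk hdv
    have h1 := main 0 le_rfl hn0 (by simpa using hdv)
    have h2 : (n : ℤ) ∣ ((b : ℤ) - k) % K := by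
      apply Int.dvd_of_emod_eq_zero; rw [hdn]; exact Int.emod_eq_zero_of_dvd hdv
    have h3 : ((b : ℤ) - k) % K ≠ 0 := by
      intro h0
      apply hbk
      refine eq_of_emod_eq hb hb' hk hk' ?_
      exact Int.emod_eq_emod_iff_emod_sub_eq_zero.2 h0
    exact ⟨Int.le_of_dvd (by omega) h2, by omega⟩
  rcases hs with rfl | rfl <;> rcases ht with rfl | rfl
  · simp only [if_true, gap] at hdv ⊢
    have := same (by rintro rfl; exact hne rfl) (by
      obtain ⟨q, hq⟩ := hdv; exact ⟨-q, by push_cast at hq; linarith⟩)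
    omega
  · simp only [if_true, gap, OfNat.ofNat_ne_one, if_false] at hdv ⊢
    have := main (a 1 + 1) (by omega) (by omega) (by
      rw [← dvd_neg]
      have := dvd_add hdv (dvd_refl (n : ℤ))
      convert this using 1; rw [hn]; push_cast; ring)
    omega
  · simp only [if_true, gap, OfNat.ofNat_ne_one, if_false] at hdv ⊢
    have := main (a 2 + 1) (by omega) (by omega) (by
      obtain ⟨q, hq⟩ := hdv; exact ⟨-q, by push_cast at hq; linarith⟩)
    omega
  · simp only [gap, OfNat.ofNat_ne_one, if_false] at hdv ⊢
    have := same (by rintro rfl; exact hne rfl) (by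
      obtain ⟨q, hq⟩ := hdv; exact ⟨-q, by push_cast at hq; linarith⟩)
    omega

theorem upper (L : ℕ) (a : ℕ → ℕ) (K : ℕ) (hK : K = L + a 1 + a 2 + 1)
    (hdvd : (a 1 + a 2 + 2) ∣ K) :
    ValidCode (barWant K 2) (barKnown K 2 L a) 1 (a 1 + a 2 + 2) := by
  classical
  rw [validCode_iff]
  have : Fintype (Msg K 2) := Fintype.ofInjective
    (fun m : Msg K 2 => ((⟨m.1.1, m.2.1⟩, ⟨m.1.2, m.2.2⟩) : Finset.Icc 1 K × Finset.Icc 1 2))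
    (by
      intro m m' h
      simp only [Prod.mk.injEq, Subtype.mk.injEq] at h
      exact Subtype.ext (Prod.ext h.1 h.2))
  let S : (Msg K 2 → Fin 1 → Bool) → ℕ → ZMod 2 := fun x c =>
    ∑ m with cls a m.1 = c, (if x m 0 = true then 1 else 0)
  refine ⟨fun x c => decide (S x c.1 = 1), ?_⟩
  intro u x y hE hk m hm
  have hlt : cls a m.1 < a 1 + a 2 + 2 := Nat.mod_lt _ (by omega)
  have h1 := congrFun hE ⟨cls a m.1, hlt⟩
  have h2 : S x (cls a m.1) = S y (cls a m.1) := by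
    have : ∀ s s' : ZMod 2, decide (s = 1) = decide (s' = 1) → s = s' := by decide
    exact this _ _ h1
  have hmem : m ∈ (Finset.univ.filter fun m' : Msg K 2 => cls a m'.1 = cls a m.1) := by simp
  simp only [S] at h2
  rw [← Finset.add_sum_erase _ _ hmem, ← Finset.add_sum_erase _ _ hmem] at h2
  have hmu : m.1.1 = u.1 := hm
  have h3 : ∀ m' ∈ (Finset.univ.filter fun m' : Msg K 2 => cls a m'.1 = cls a m.1).erase m,
      (if x m' 0 = true then (1 : ZMod 2) else 0) = if y m' 0 = true then 1 else 0 := by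
    intro m' hm'
    rw [Finset.mem_erase, Finset.mem_filter] at hm'
    have hkn : m' ∈ barKnown K 2 L a u := by
      have b1 := Finset.mem_Icc.1 m.2.1
      have b2 := Finset.mem_Icc.1 m.2.2
      have b3 := Finset.mem_Icc.1 m'.2.1
      have b4 := Finset.mem_Icc.1 m'.2.2
      have := cls_known L a K hK hdvd m.1.1 m.1.2 m'.1.1 m'.1.2 b1.1 b1.2 b3.1 b3.2
        (by omega) (by omega) (fun h => hm'.1 (Subtype.ext h)) hm'.2.2
      rw [hmu] at this
      exact this
    rw [hk m' hkn]
  rw [Finset.sum_congr rfl h3, add_left_inj] at h2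
  funext i
  rw [Subsingleton.elim i 0]
  revert h2
  cases x m 0 <;> cases y m 0 <;> simp

/-- Theorem 5 of the paper: for the `(a_2,a_1)_L`-bar-ICP (the case
`i = 2`), if `a_1 + a_2 + 2` divides `K` then the optimal broadcast rate equals
exactly `a_1 + a_2 + 2`. -/
theorem stmt5 (L : ℕ) (hL : 1 ≤ L) (a : ℕ → ℕ)
    (K : ℕ) (hK : K = L + a 1 + a 2 + 1)
    (hdvd : (a 1 + a 2 + 2) ∣ K) :
    optRate (barWant K 2) (barKnown K 2 L a) = (a 1 : ℝ) + (a 2 : ℝ) + 2 := by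
  unfold optRate
  apply IsLeast.csInf_eq
  constructor
  · exact ⟨1, a 1 + a 2 + 2, le_rfl, upper L a K hK hdvd, by push_cast; ring⟩
  · rintro ρ ⟨t, ℓ, ht, hv, rfl⟩
    have h := lower L hL a K hK t ℓ hv
    have ht' : (0 : ℝ) < t := by exact_mod_cast ht
    rw [le_div_iff₀ ht']
    exact_mod_cast h
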